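/- For every l ∈ {1,…,K}, the restriction of Ψ to {1,…,2^l} is a bijection onto the collection of all subsets of {1,…,l}. -/

import Mathlib

/-- `η(k) = 1` if `k` is even and `η(k) = ν₂(k−1) + 1` if `k` is odd (used for `k ≥ 2`),
where `ν₂(m) = padicValNat 2 m` is the 2-adic valuation. -/
def eta (k : ℕ) : ℕ := if Even k then 1 else padicValNat 2 (k - 1) + 1

/-- The set-level form `Ψ` of the map `ψ` of the paper: `Ψ(1) = ∅` and
`Ψ(k) = Ψ(k−1) △ {η(k)}` for `k ≥ 2` (`Ψ(0)` is junk). -/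
def Psi : ℕ → Finset ℕ
  | 0 => ∅
  | 1 => ∅
  | k + 2 => symmDiff (Psi (k + 1)) {eta (k + 2)}

theorem eta_succ_succ (n : ℕ) : eta (n + 2) = padicValNat 2 (n + 1) + 1 := by
  unfold eta
  split_ifs with h
  · have : ¬ 2 ∣ n + 1 := by
      rw [Nat.even_iff] at h
      omega
    rw [padicValNat.eq_zero_of_not_dvd this]
  · rfl

theorem Psi_step (n : ℕ) :
    Psi (n + 2) = symmDiff (Psi (n + 1)) {padicValNat 2 (n + 1) + 1} := by
  rw [Psi, eta_succ_succ]

theorem val_add (l j : ℕ) (h0 : j ≠ 0) (hj : j < 2 ^ l) :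
    padicValNat 2 (2 ^ l + j) = padicValNat 2 j := by
  have hv : padicValNat 2 j < l := by
    by_contra! h
    have h1 : 2 ^ l ∣ j := (padicValNat_dvd_iff_le h0).2 h
    exact absurd (Nat.le_of_dvd (by omega) h1) (by omega)
  apply le_antisymm
  · by_contra! h
    have h1 : 2 ^ (padicValNat 2 j + 1) ∣ 2 ^ l + j :=
      (padicValNat_dvd_iff_le (by omega)).2 h
    have h2 : 2 ^ (padicValNat 2 j + 1) ∣ 2 ^ l := pow_dvd_pow 2 hv
    have h3 := (Nat.dvd_add_right h2).1 h1
    have := (padicValNat_dvd_iff_le h0).1 h3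
    omega
  · apply (padicValNat_dvd_iff_le (by omega)).1
    exact Nat.dvd_add (pow_dvd_pow 2 hv.le) pow_padicValNat_dvd

theorem Psi_add (l j : ℕ) (hj : j < 2 ^ l) :
    Psi (2 ^ l + j + 1) = symmDiff (Psi (2 ^ l + 1)) (Psi (j + 1)) := by
  induction j with
  | zero =>
    have h : Psi (0 + 1) = ⊥ := by simp [Psi]
    rw [h, symmDiff_bot, add_zero]
  | succ j ih =>
    have h := Psi_step (2 ^ l + j)
    rw [ih (by omega), add_assoc (2 ^ l) j 1, val_add l (j + 1) (by omega) hj] at h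
    rw [Psi_step j, ← symmDiff_assoc, ← h]
    rfl

theorem Psi_main (l : ℕ) : (∀ n < 2 ^ l, Psi (n + 1) ⊆ Finset.Icc 1 l) ∧
    (∀ m < 2 ^ l, ∀ n < 2 ^ l, Psi (m + 1) = Psi (n + 1) → m = n) := by
  induction l with
  | zero =>
    refine ⟨fun n hn => ?_, fun m hm n hn _ => by omega⟩
    obtain rfl : n = 0 := by omega
    simp [Psi]
  | succ l ih =>
    obtain ⟨ih1, ih2⟩ := ih
    have hpos : 0 < 2 ^ l := by positivity
    have hpow : 2 ^ (l + 1) = 2 ^ l + 2 ^ l := by ring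
    have htop : Psi (2 ^ l + 1) = symmDiff (Psi (2 ^ l - 1 + 1)) {l + 1} := by
      have h := Psi_step (2 ^ l - 1)
      have e : 2 ^ l - 1 + 1 = 2 ^ l := by omega
      have e2 : 2 ^ l - 1 + 2 = 2 ^ l + 1 := by omega
      rw [e2] at h
      rw [h, e, padicValNat.prime_pow]
    have hnot : ∀ n < 2 ^ l, l + 1 ∉ Psi (n + 1) := by
      intro n hn hmem
      have := Finset.mem_Icc.1 (ih1 n hn hmem)
      omega
    have hlast := hnot (2 ^ l - 1) (by omega)
    have hmem : ∀ j < 2 ^ l, l + 1 ∈ Psi (2 ^ l + j + 1) := by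
      intro j hj
      rw [Psi_add l j hj, htop]
      simp only [Finset.mem_symmDiff, Finset.mem_singleton]
      have := hnot j hj
      tauto
    have hsplit : ∀ n < 2 ^ (l + 1), n < 2 ^ l ∨ ∃ j < 2 ^ l, n = 2 ^ l + j := by
      intro n hn
      by_cases h : n < 2 ^ l
      · exact Or.inl h
      · exact Or.inr ⟨n - 2 ^ l, by omega, by omega⟩
    constructor
    · intro n hn x hx
      have low : ∀ j < 2 ^ l, x ∈ Psi (j + 1) → 1 ≤ x ∧ x ≤ l :=
        fun j hj h => Finset.mem_Icc.1 (ih1 j hj h)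
      rw [Finset.mem_Icc]
      rcases hsplit n hn with h | ⟨j, hj, rfl⟩
      · have := low n h hx
        omega
      · rw [Psi_add l j hj, htop] at hx
        simp only [Finset.mem_symmDiff, Finset.mem_singleton] at hx
        have h1 := low j hj
        have h2 := low (2 ^ l - 1) (by omega)
        by_cases a : x ∈ Psi (j + 1)
        · have := h1 a
          omega
        · by_cases b : x ∈ Psi (2 ^ l - 1 + 1)
          · have := h2 b
            omega
          · have : x = l + 1 := by tauto
            omega
    · intro m hm n hn h
      rcases hsplit m hm with hm' | ⟨i, hi, rfl⟩ <;> rcases hsplit n hn with hn' | ⟨j, hj, rfl⟩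
      · exact ih2 m hm' n hn' h
      · exact absurd (h ▸ hmem j hj) (hnot m hm')
      · exact absurd (h ▸ hmem i hi) (hnot n hn')
      · rw [Psi_add l i hi, Psi_add l j hj] at h
        rw [ih2 i hi j hj (symmDiff_right_injective _ h)]

/-- For every `l ∈ {1,…,K}`, the restriction of `Ψ` to `{1,…,2^l}` is a bijection
onto the collection of all subsets of `{1,…,l}`. -/
theorem psi_bijOn (K : ℕ) : ∀ l, 1 ≤ l → l ≤ K →
    Set.BijOn Psi (Set.Icc 1 (2 ^ l)) {S : Finset ℕ | S ⊆ Finset.Icc 1 l} := by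
  intro l _ _
  obtain ⟨h1, h2⟩ := Psi_main l
  have hmaps : ∀ k ∈ Finset.Icc 1 (2 ^ l), Psi k ⊆ Finset.Icc 1 l := by
    intro k hk
    rw [Finset.mem_Icc] at hk
    obtain ⟨n, rfl⟩ : ∃ n, k = n + 1 := ⟨k - 1, by omega⟩
    exact h1 n (by omega)
  have hinj : Set.InjOn Psi (Set.Icc 1 (2 ^ l)) := by
    intro a ha b hb hab
    rw [Set.mem_Icc] at ha hb
    obtain ⟨m, rfl⟩ : ∃ n, a = n + 1 := ⟨a - 1, by omega⟩
    obtain ⟨n, rfl⟩ : ∃ n, b = n + 1 := ⟨b - 1, by omega⟩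
    rw [h2 m (by omega) n (by omega) hab]
  have himg : (Finset.Icc 1 (2 ^ l)).image Psi = (Finset.Icc 1 l).powerset := by
    apply Finset.eq_of_subset_of_card_le
    · intro S hS
      obtain ⟨k, hk, rfl⟩ := Finset.mem_image.1 hS
      exact Finset.mem_powerset.2 (hmaps k hk)
    · rw [Finset.card_image_of_injOn (by simpa using hinj)]
      simp
  refine ⟨fun k hk => hmaps k (by simpa using hk), hinj, fun S hS => ?_⟩
  have : S ∈ (Finset.Icc 1 (2 ^ l)).image Psi := himg ▸ Finset.mem_powerset.2 hS
  obtain ⟨k, hk, rfl⟩ := Finset.mem_image.1 this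
  exact ⟨k, by simpa using hk, rfl⟩
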